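/- Let δ ≥ 2 and let Σ = {A, H, T, X} be a four-element set. Let B₀ be the set of multisets of size δ over Σ that contain at least one X, or contain at least one H and at least one T. Call a δ-tuple (S₁,…,S_δ) of nonempty subsets of Σ closed if for every choice x₁ ∈ S₁, …, x_δ ∈ S_δ the multiset {x₁,…,x_δ} belongs to B₀; order such tuples by (S₁,…,S_δ) ≤ (S′₁,…,S′_δ) iff there is a permutation π with S_i ⊆ S′_{π(i)} for all i. Then the maximal closed tuples are exactly, up to permutation of coordinates: ({X}, Σ, …, Σ) (one coordinate {X} and δ−1 coordinates Σ) and ({H,X}, {T,X}, Σ, …, Σ) (one coordinate {H,X}, one coordinate {T,X}, and δ−2 coordinates Σ). -/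

import Mathlib

/-- The four-letter alphabet `Σ = {A, H, T, X}`. -/
inductive Sig : Type
  | A | H | T | X
deriving DecidableEq

instance : Fintype Sig :=
  ⟨{Sig.A, Sig.H, Sig.T, Sig.X}, fun x => by cases x <;> simp⟩

/-- The multiset of values of a tuple. -/
def tupleMultiset {n : ℕ} (f : Fin n → Sig) : Multiset Sig :=
  (Finset.univ : Finset (Fin n)).val.map f

/-- Membership in the black constraint `B₀` of `FDSO(s)`: the multiset contains at least one
`X`, or at least one `H` and at least one `T`. -/
def InB0 (m : Multiset Sig) : Prop :=
  Sig.X ∈ m ∨ (Sig.H ∈ m ∧ Sig.T ∈ m)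

/-- A tuple of subsets of `Σ` is closed if every choice from the sets gives a multiset
in `B₀`. -/
def ClosedB0 {δ : ℕ} (S : Fin δ → Set Sig) : Prop :=
  ∀ f : Fin δ → Sig, (∀ i, f i ∈ S i) → InB0 (tupleMultiset f)

/-- `S ≤ S'` iff there is a permutation `π` with `S i ⊆ S' (π i)` for all `i`. -/
def TupLE {δ : ℕ} (S S' : Fin δ → Set Sig) : Prop :=
  ∃ π : Equiv.Perm (Fin δ), ∀ i, S i ⊆ S' (π i)

/-- Two tuples are equal up to a permutation of coordinates. -/
def PermEq {δ : ℕ} (S S' : Fin δ → Set Sig) : Prop :=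
  ∃ π : Equiv.Perm (Fin δ), ∀ i, S i = S' (π i)

/-!
A closed tuple has a coordinate inside `{H, X}` and a coordinate inside `{T, X}`: otherwise,
picking from each coordinate a letter outside that pair gives a multiset outside `B₀`. If the two
coordinates agree, that one lies in `{H, X} ∩ {T, X} = {X}`. So every closed tuple is below
`({X}, Σ, …, Σ)` or `({H, X}, {T, X}, Σ, …, Σ)`. These two are closed and incomparable, hence they
are the maximal ones up to the equivalence attached to the preorder, which is equality up to
permutation because the coordinates are finite sets.
-/

theorem maximal_iff_exists_antisymmRel {α : Type*} {r : α → α → Prop} [IsTrans α r]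
    {P : α → Prop} {s : Set α} (hs : IsAntichain r s) (hsP : ∀ u ∈ s, P u)
    (hcover : ∀ x, P x → ∃ u ∈ s, r x u) (hP : ∀ x y, AntisymmRel r x y → P y → P x) (x : α) :
    (P x ∧ ∀ y, P y → r x y → r y x) ↔ ∃ u ∈ s, AntisymmRel r x u := by
  constructor
  · rintro ⟨hx, hmax⟩
    obtain ⟨u, hu, hxu⟩ := hcover x hx
    exact ⟨u, hu, hxu, hmax u (hsP u hu) hxu⟩
  · rintro ⟨u, hu, hxu⟩
    refine ⟨hP x u hxu (hsP u hu), fun y hy hxy => ?_⟩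
    obtain ⟨v, hv, hyv⟩ := hcover y hy
    obtain rfl : u = v := hs.eq hu hv (_root_.trans hxu.2 (_root_.trans hxy hyv))
    exact _root_.trans hyv hxu.2

section TupleOrder

variable {δ : ℕ} {S S' : Fin δ → Set Sig}

instance : IsTrans (Fin δ → Set Sig) TupLE where
  trans := fun _ _ _ ⟨π, hπ⟩ ⟨ρ, hρ⟩ => ⟨π.trans ρ, fun i => (hπ i).trans (hρ (π i))⟩

theorem PermEq.antisymmRel (h : PermEq S S') : AntisymmRel TupLE S S' := by
  obtain ⟨π, hπ⟩ := h
  exact ⟨⟨π, fun i => (hπ i).subset⟩, ⟨π.symm, fun i => by simp [hπ]⟩⟩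

theorem TupLE.sum_ncard_le (h : TupLE S S') : ∑ i, (S i).ncard ≤ ∑ i, (S' i).ncard := by
  obtain ⟨π, hπ⟩ := h
  calc ∑ i, (S i).ncard ≤ ∑ i, (S' (π i)).ncard :=
        Finset.sum_le_sum fun i _ => Set.ncard_le_ncard (hπ i)
    _ = ∑ i, (S' i).ncard := Equiv.sum_comp π fun i => (S' i).ncard

theorem TupLE.permEq (h : TupLE S S') (h' : TupLE S' S) : PermEq S S' := by
  obtain ⟨π, hπ⟩ := h
  have ncard_le : ∀ i ∈ Finset.univ, (S i).ncard ≤ (S' (π i)).ncard :=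
    fun i _ => Set.ncard_le_ncard (hπ i)
  have sum_ge : ∑ i, (S' (π i)).ncard ≤ ∑ i, (S i).ncard :=
    (Equiv.sum_comp π fun i => (S' i).ncard).trans_le h'.sum_ncard_le
  have ncard_eq := (Finset.sum_eq_sum_iff_of_le ncard_le).1
    ((Finset.sum_le_sum ncard_le).antisymm sum_ge)
  exact ⟨π, fun i => Set.eq_of_subset_of_ncard_le (hπ i) (ncard_eq i (Finset.mem_univ i)).ge⟩

theorem antisymmRel_tupLE_iff_permEq : AntisymmRel TupLE S S' ↔ PermEq S S' :=
  ⟨fun h => h.1.permEq h.2, PermEq.antisymmRel⟩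

end TupleOrder

section Closed

variable {δ : ℕ} {S S' : Fin δ → Set Sig}

theorem mem_tupleMultiset {f : Fin δ → Sig} {x : Sig} : x ∈ tupleMultiset f ↔ ∃ i, f i = x := by
  simp [tupleMultiset]

theorem tupleMultiset_comp_perm (f : Fin δ → Sig) (π : Equiv.Perm (Fin δ)) :
    tupleMultiset (f ∘ π) = tupleMultiset f := by
  rw [tupleMultiset, ← Multiset.map_map, Multiset.map_univ_val_equiv, tupleMultiset]

theorem ClosedB0.of_tupLE (hS' : ClosedB0 S') (h : TupLE S S') : ClosedB0 S := by
  obtain ⟨π, hπ⟩ := h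
  intro f hf
  rw [← tupleMultiset_comp_perm f π.symm]
  exact hS' _ fun i => by simpa using hπ (π.symm i) (hf (π.symm i))

theorem ClosedB0.exists_subset (hS : ClosedB0 S) {s : Set Sig}
    (hs : ∀ m, InB0 m → ∃ x ∈ m, x ∈ s) : ∃ i, S i ⊆ s := by
  by_contra! hns
  choose f hfS hfs using fun i => Set.not_subset.1 (hns i)
  obtain ⟨x, hx, hxs⟩ := hs _ (hS f hfS)
  obtain ⟨i, rfl⟩ := mem_tupleMultiset.1 hx
  exact hfs i hxs

theorem ClosedB0.exists_subset_H_X (hS : ClosedB0 S) : ∃ i, S i ⊆ {Sig.H, Sig.X} :=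
  hS.exists_subset fun _ hm => hm.elim (⟨_, ·, by simp⟩) (⟨_, ·.1, by simp⟩)

theorem ClosedB0.exists_subset_T_X (hS : ClosedB0 S) : ∃ i, S i ⊆ {Sig.T, Sig.X} :=
  hS.exists_subset fun _ hm => hm.elim (⟨_, ·, by simp⟩) (⟨_, ·.2, by simp⟩)

/-- The tuples competing for maximality: closed, with all coordinates nonempty. -/
def IsNonemptyClosed (S : Fin δ → Set Sig) : Prop :=
  (∀ i, (S i).Nonempty) ∧ ClosedB0 S

theorem IsNonemptyClosed.of_antisymmRel (hS' : IsNonemptyClosed S')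
    (h : AntisymmRel TupLE S S') : IsNonemptyClosed S := by
  refine ⟨fun i => ?_, hS'.2.of_tupLE h.1⟩
  obtain ⟨π, hπ⟩ := h.2
  simpa using (hS'.1 (π.symm i)).mono (hπ (π.symm i))

end Closed

section MaximalTuples

variable {δ : ℕ} {S : Fin δ → Set Sig}

/-- The tuple `({X}, Σ, …, Σ)`, with `{X}` at coordinate `a`. -/
def tupleX (a : Fin δ) : Fin δ → Set Sig :=
  fun i => if i = a then {Sig.X} else Set.univ

/-- The tuple `({H, X}, {T, X}, Σ, …, Σ)`, with `{H, X}` at coordinate `a` and `{T, X}` at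
coordinate `b`; it is meant for `a ≠ b`, and the value at `a` wins otherwise. -/
def tupleHT (a b : Fin δ) : Fin δ → Set Sig :=
  fun i => if i = a then {Sig.H, Sig.X} else if i = b then {Sig.T, Sig.X} else Set.univ

theorem isNonemptyClosed_tupleX (a : Fin δ) : IsNonemptyClosed (tupleX a) := by
  refine ⟨fun i => ⟨Sig.X, by unfold tupleX; split_ifs <;> simp⟩, fun f hf => ?_⟩
  have hfa : f a = Sig.X := by simpa [tupleX] using hf a
  exact Or.inl (mem_tupleMultiset.2 ⟨a, hfa⟩)

theorem isNonemptyClosed_tupleHT {a b : Fin δ} (hab : a ≠ b) :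
    IsNonemptyClosed (tupleHT a b) := by
  refine ⟨fun i => ⟨Sig.X, by unfold tupleHT; split_ifs <;> simp⟩, fun f hf => ?_⟩
  have hfa : f a = Sig.H ∨ f a = Sig.X := by simpa [tupleHT] using hf a
  have hfb : f b = Sig.T ∨ f b = Sig.X := by simpa [tupleHT, hab.symm] using hf b
  simp only [InB0, mem_tupleMultiset]
  rcases hfa with hH | hX
  · exact hfb.elim (fun hT => Or.inr ⟨⟨a, hH⟩, ⟨b, hT⟩⟩) (fun hX => Or.inl ⟨b, hX⟩)
  · exact Or.inl ⟨a, hX⟩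

theorem not_tupLE_tupleX_tupleHT (a : Fin δ) {b c : Fin δ} (hbc : b ≠ c) :
    ¬ TupLE (tupleX a) (tupleHT b c) := by
  rintro ⟨π, hπ⟩
  have symm_eq : ∀ j, Sig.A ∉ tupleHT b c j → π.symm j = a := by
    intro j hj
    by_contra hne
    have hA : Sig.A ∈ tupleX a (π.symm j) := by simp [tupleX, hne]
    exact hj (by simpa using hπ _ hA)
  have hb : π.symm b = a := symm_eq b (by simp [tupleHT])
  have hc : π.symm c = a := symm_eq c (by simp [tupleHT, hbc.symm])
  exact hbc (π.symm.injective (hb.trans hc.symm))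

theorem not_tupLE_tupleHT_tupleX (a b c : Fin δ) : ¬ TupLE (tupleHT a b) (tupleX c) := by
  rintro ⟨π, hπ⟩
  have subset_X : tupleHT a b (π.symm c) ⊆ {Sig.X} := by simpa [tupleX] using hπ (π.symm c)
  have mem_H_or_T : Sig.H ∈ tupleHT a b (π.symm c) ∨ Sig.T ∈ tupleHT a b (π.symm c) := by
    unfold tupleHT
    split_ifs <;> simp
  rcases mem_H_or_T with hH | hT
  · cases subset_X hH
  · cases subset_X hT

theorem isAntichain_tupleX_tupleHT (a : Fin δ) {b c : Fin δ} (hbc : b ≠ c) :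
    IsAntichain TupLE {tupleX a, tupleHT b c} :=
  Set.pairwise_pair.2 fun _ =>
    ⟨not_tupLE_tupleX_tupleHT a hbc, not_tupLE_tupleHT_tupleX b c a⟩

theorem tupLE_tupleX {i : Fin δ} (hi : S i ⊆ {Sig.X}) (a : Fin δ) : TupLE S (tupleX a) := by
  refine ⟨Equiv.swap i a, fun k => ?_⟩
  unfold tupleX
  split_ifs with hk
  · obtain rfl : k = i := by simpa using Equiv.swap_apply_eq_iff.1 hk
    exact hi
  · exact Set.subset_univ _

theorem tupLE_tupleHT {i j a b : Fin δ} (hi : S i ⊆ {Sig.H, Sig.X}) (hj : S j ⊆ {Sig.T, Sig.X})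
    (hij : i ≠ j) (hab : a ≠ b) : TupLE S (tupleHT a b) := by
  obtain ⟨π, rfl, rfl⟩ : ∃ π : Equiv.Perm (Fin δ), π • i = a ∧ π • j = b :=
    MulAction.is_two_pretransitive_iff.1 (Equiv.Perm.isMultiplyPretransitive _ 2) hij hab
  refine ⟨π, fun k => ?_⟩
  simp only [tupleHT, Equiv.Perm.smul_def, π.injective.eq_iff]
  split_ifs with hki hkj
  · exact hki ▸ hi
  · exact hkj ▸ hj
  · exact Set.subset_univ _

theorem ClosedB0.tupLE_tupleX_or_tupLE_tupleHT (hS : ClosedB0 S) (a : Fin δ) {b c : Fin δ}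
    (hbc : b ≠ c) : TupLE S (tupleX a) ∨ TupLE S (tupleHT b c) := by
  obtain ⟨i, hi⟩ := hS.exists_subset_H_X
  obtain ⟨j, hj⟩ := hS.exists_subset_T_X
  obtain rfl | hij := eq_or_ne i j
  · have hX : ({Sig.H, Sig.X} ∩ {Sig.T, Sig.X} : Set Sig) ⊆ {Sig.X} := by
      rintro x ⟨rfl | hx, hx'⟩ <;> simp_all
    exact Or.inl (tupLE_tupleX ((Set.subset_inter hi hj).trans hX) a)
  · exact Or.inr (tupLE_tupleHT hi hj hij hbc)

theorem maximal_isNonemptyClosed_iff (a : Fin δ) {b c : Fin δ} (hbc : b ≠ c) :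
    (IsNonemptyClosed S ∧ ∀ S', IsNonemptyClosed S' → TupLE S S' → TupLE S' S) ↔
      PermEq S (tupleX a) ∨ PermEq S (tupleHT b c) := by
  have hcandidates : ∀ U ∈ ({tupleX a, tupleHT b c} : Set (Fin δ → Set Sig)),
      IsNonemptyClosed U := by
    rintro U (rfl | rfl)
    exacts [isNonemptyClosed_tupleX a, isNonemptyClosed_tupleHT hbc]
  have hcover : ∀ S', IsNonemptyClosed S' →
      ∃ U ∈ ({tupleX a, tupleHT b c} : Set (Fin δ → Set Sig)), TupLE S' U := by
    intro S' hS'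
    simpa using hS'.2.tupLE_tupleX_or_tupLE_tupleHT a hbc
  rw [maximal_iff_exists_antisymmRel (isAntichain_tupleX_tupleHT a hbc) hcandidates hcover
    fun _ _ h hS' => hS'.of_antisymmRel h]
  simp only [Set.mem_insert_iff, Set.mem_singleton_iff, exists_eq_or_imp, exists_eq_left,
    antisymmRel_tupLE_iff_permEq]

end MaximalTuples

/-- For `δ ≥ 2`, the maximal closed `δ`-tuples of nonempty subsets of `Σ` for
the black constraint of `FDSO(s)` are exactly, up to permutation of coordinates,
`({X}, Σ, …, Σ)` and `({H,X}, {T,X}, Σ, …, Σ)`. -/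
theorem stmt_12 (δ : ℕ) (hδ : 2 ≤ δ) (S : Fin δ → Set Sig)
    (hS : ∀ i, (S i).Nonempty) :
    (ClosedB0 S ∧ ∀ S' : Fin δ → Set Sig, (∀ i, (S' i).Nonempty) → ClosedB0 S' →
        TupLE S S' → TupLE S' S) ↔
    (PermEq S (fun i => if i = (⟨0, by omega⟩ : Fin δ) then ({Sig.X} : Set Sig)
                        else Set.univ) ∨
     PermEq S (fun i => if i = (⟨0, by omega⟩ : Fin δ) then ({Sig.H, Sig.X} : Set Sig)
                        else if i = (⟨1, by omega⟩ : Fin δ) then ({Sig.T, Sig.X} : Set Sig)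
                        else Set.univ)) := by
  have h01 : (⟨0, by omega⟩ : Fin δ) ≠ ⟨1, by omega⟩ := by simp
  refine Iff.trans ?_ (maximal_isNonemptyClosed_iff ⟨0, by omega⟩ h01)
  simp only [IsNonemptyClosed, hS, implies_true, true_and, and_imp]
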